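/- Let γ : ℝ → ℂ be a smooth curve parametrized by arclength that satisfies the Abresch–Langer self-shrinker equation γ''(t) = ⟨γ'(t), i·γ(t)⟩ · i·γ'(t) for all t. Then the function t ↦ ⟨γ'(t), i·γ(t)⟩ · e^{−|γ(t)|²/2} is constant on ℝ; consequently the curvature κ(t) = ⟨γ''(t), i·γ'(t)⟩ satisfies κ(t) = ρ · e^{|γ(t)|²/2} for all t, where ρ = ⟨γ'(0), i·γ(0)⟩ · e^{−|γ(0)|²/2}. -/

import Mathlib

/-- Real inner product on ℂ ≅ ℝ²: ⟨u,v⟩ = Re(u · conj v). -/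
noncomputable def rinner (u v : ℂ) : ℝ := u.re * v.re + u.im * v.im

/-!
Let `J` be a linear isometry with `J x ⟂ x`, such as multiplication by `i` on `ℂⁿ`. Along a solution
of `γ'' = κ J γ'` with `κ = ⟪γ', J γ⟫`, differentiating `κ` gives `κ ⟪J γ', J γ⟫ + ⟪γ', J γ'⟫`, in
which the second term vanishes and the first is `κ ⟪γ', γ⟫`. Hence `κ' = (‖γ‖² / 2)' κ`, and so
`κ exp (-‖γ‖² / 2)` is constant.
-/

theorem mul_exp_neg_eq_of_hasDerivAt {f g g' : ℝ → ℝ}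
    (hf : ∀ t, HasDerivAt f (g' t * f t) t) (hg : ∀ t, HasDerivAt g (g' t) t) (s t : ℝ) :
    f s * Real.exp (-g s) = f t * Real.exp (-g t) := by
  have hconst (r : ℝ) : HasDerivAt (fun r ↦ f r * Real.exp (-g r)) 0 r :=
    ((hf r).mul (hg r).neg.exp).congr_deriv (by ring)
  exact is_const_of_deriv_eq_zero (fun r ↦ (hconst r).differentiableAt)
    (fun r ↦ (hconst r).deriv) s t

section InnerProductSpace

open scoped InnerProductSpace

variable {E : Type*} [NormedAddCommGroup E] [InnerProductSpace ℝ E] {J : E →ₗᵢ[ℝ] E}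

theorem hasDerivAt_norm_sq_div_two {γ : ℝ → E} {v : E} {t : ℝ} (hγ : HasDerivAt γ v t) :
    HasDerivAt (fun s ↦ ‖γ s‖ ^ 2 / 2) ⟪γ t, v⟫_ℝ t :=
  (hγ.norm_sq.div_const 2).congr_deriv (by ring)

theorem hasDerivAt_inner_map_of_hasDerivAt_smul_map (hJ : ∀ x, ⟪x, J x⟫_ℝ = 0) {γ v : ℝ → E}
    {κ t : ℝ} (hγ : HasDerivAt γ (v t) t) (hv : HasDerivAt v (κ • J (v t)) t) :
    HasDerivAt (fun s ↦ ⟪v s, J (γ s)⟫_ℝ) (⟪γ t, v t⟫_ℝ * κ) t := by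
  have hJγ : HasDerivAt (fun s ↦ J (γ s)) (J (v t)) t :=
    J.toContinuousLinearMap.hasFDerivAt.comp_hasDerivAt t hγ
  refine (hv.inner ℝ hJγ).congr_deriv ?_
  calc ⟪v t, J (v t)⟫_ℝ + ⟪κ • J (v t), J (γ t)⟫_ℝ
      = κ * ⟪v t, γ t⟫_ℝ := by rw [hJ, zero_add, real_inner_smul_left, J.inner_map_map]
    _ = ⟪γ t, v t⟫_ℝ * κ := by rw [real_inner_comm, mul_comm]

theorem inner_smul_map_map (κ : ℝ) (x : E) : ⟪κ • J x, J x⟫_ℝ = ‖x‖ ^ 2 * κ := by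
  rw [real_inner_smul_left, real_inner_self_eq_norm_sq, J.norm_map, mul_comm]

theorem abresch_langer_curvature_general (hJ : ∀ x, ⟪x, J x⟫_ℝ = 0) {γ : ℝ → E}
    (hγ : Differentiable ℝ γ) (hγ' : Differentiable ℝ (deriv γ))
    (hAL : ∀ t, deriv (deriv γ) t = ⟪deriv γ t, J (γ t)⟫_ℝ • J (deriv γ t)) (t₀ : ℝ) :
    (∀ t, ⟪deriv γ t, J (γ t)⟫_ℝ * Real.exp (-‖γ t‖ ^ 2 / 2)
        = ⟪deriv γ t₀, J (γ t₀)⟫_ℝ * Real.exp (-‖γ t₀‖ ^ 2 / 2)) ∧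
    (∀ t, ⟪deriv (deriv γ) t, J (deriv γ t)⟫_ℝ
        = ‖deriv γ t‖ ^ 2 * ((⟪deriv γ t₀, J (γ t₀)⟫_ℝ * Real.exp (-‖γ t₀‖ ^ 2 / 2))
            * Real.exp (‖γ t‖ ^ 2 / 2))) := by
  have hconst (t : ℝ) : ⟪deriv γ t, J (γ t)⟫_ℝ * Real.exp (-‖γ t‖ ^ 2 / 2)
      = ⟪deriv γ t₀, J (γ t₀)⟫_ℝ * Real.exp (-‖γ t₀‖ ^ 2 / 2) := by
    simp only [neg_div]
    exact mul_exp_neg_eq_of_hasDerivAt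
      (fun s ↦ hasDerivAt_inner_map_of_hasDerivAt_smul_map hJ (hγ s).hasDerivAt
        (hAL s ▸ (hγ' s).hasDerivAt))
      (fun s ↦ hasDerivAt_norm_sq_div_two (hγ s).hasDerivAt) t t₀
  refine ⟨hconst, fun t ↦ ?_⟩
  rw [hAL, inner_smul_map_map, ← hconst t, mul_assoc ⟪_, _⟫_ℝ, ← Real.exp_add, neg_div,
    neg_add_cancel, Real.exp_zero, mul_one]

theorem rinner_eq_inner (u v : ℂ) : rinner u v = ⟪u, v⟫_ℝ := by
  simp [rinner, Complex.inner, mul_comm]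

end InnerProductSpace

/-- For a smooth arclength-parametrized curve satisfying the Abresch–Langer
self-shrinker equation γ'' = ⟨γ', iγ⟩ iγ', the quantity ⟨γ', iγ⟩ e^{-|γ|²/2} is
constant, hence the curvature κ = ⟨γ'', iγ'⟩ equals ρ e^{|γ|²/2}. -/
theorem abresch_langer_curvature (γ : ℝ → ℂ) (hsmooth : ContDiff ℝ (⊤ : ℕ∞) γ)
    (harc : ∀ t, ‖deriv γ t‖ = 1)
    (hAL : ∀ t, deriv (deriv γ) t =
      (rinner (deriv γ t) (Complex.I * γ t)) • (Complex.I * deriv γ t)) :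
    (∀ t, rinner (deriv γ t) (Complex.I * γ t) * Real.exp (-‖γ t‖ ^ 2 / 2)
        = rinner (deriv γ 0) (Complex.I * γ 0) * Real.exp (-‖γ 0‖ ^ 2 / 2)) ∧
    (∀ t, rinner (deriv (deriv γ) t) (Complex.I * deriv γ t)
        = (rinner (deriv γ 0) (Complex.I * γ 0) * Real.exp (-‖γ 0‖ ^ 2 / 2))
            * Real.exp (‖γ t‖ ^ 2 / 2)) := by
  have := Complex.finrank_real_complex_fact
  simpa [rinner_eq_inner, harc] using abresch_langer_curvature_general
    (J := Complex.orientation.rightAngleRotation.toLinearIsometry) (fun x ↦ by simp [mul_comm])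
    (hsmooth.differentiable (by simp)) (contDiff_infty.1 hsmooth 2).differentiable_deriv_two
    (by simpa [rinner_eq_inner] using hAL) 0
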